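/- Let F = {f₁,…,f_N} ⊂ ℂ[x₁,…,xₙ] with N ≥ n be a polynomial system, let p ∈ ℂⁿ be an isolated singular zero of F = 0, and let m = max_i deg(f_i). Then there exists a square polynomial system F′ = {f′₁,…,f′ₙ} with each f′_i ∈ Δ_p(F) such that p is an isolated regular zero of F′ = 0 (i.e., f′_i(p) = 0 for all i and rank(J(F′)(p)) = n, and p is an isolated point of the common zero set of F′), and max_i deg(f′_i) ≤ m. -/

import Mathlib

open MvPolynomial

/-- The rank over ℂ of the Jacobian matrix of a finite polynomial system, evaluated at `p`. -/
noncomputable def jacRank {n : ℕ} {ι : Type*} [Fintype ι]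
    (g : ι → MvPolynomial (Fin n) ℂ) (p : Fin n → ℂ) : ℕ :=
  (Matrix.of fun (i : ι) (j : Fin n) => eval p (pderiv j (g i))).rank

open MvPolynomial

/-- `DeltaSet F p` is the smallest set `Δ_p(F)` of polynomials such that
(1) `F ⊆ Δ_p(F)`;
(2) `a • h ∈ Δ_p(F)` for every `h ∈ Δ_p(F)` and every nonzero scalar `a ∈ ℂ`;
(3) `h₁ + h₂ ∈ Δ_p(F)` for all `h₁, h₂ ∈ Δ_p(F)` with `h₁(p) + h₂(p) = 0`;
(4) `∂h/∂x_i ∈ Δ_p(F)` for every `h ∈ Δ_p(F)` and index `i` with `(∂h/∂x_i)(p) = 0`. -/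
inductive DeltaSet {n : ℕ} (F : Set (MvPolynomial (Fin n) ℂ)) (p : Fin n → ℂ) :
    MvPolynomial (Fin n) ℂ → Prop
  | base {f : MvPolynomial (Fin n) ℂ} (hf : f ∈ F) : DeltaSet F p f
  | smul {h : MvPolynomial (Fin n) ℂ} (a : ℂ) (ha : a ≠ 0) (hh : DeltaSet F p h) :
      DeltaSet F p (C a * h)
  | add {h₁ h₂ : MvPolynomial (Fin n) ℂ} (hh₁ : DeltaSet F p h₁) (hh₂ : DeltaSet F p h₂)
      (hsum : eval p h₁ + eval p h₂ = 0) : DeltaSet F p (h₁ + h₂)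
  | deriv {h : MvPolynomial (Fin n) ℂ} (i : Fin n) (hh : DeltaSet F p h)
      (hz : eval p (pderiv i h) = 0) : DeltaSet F p (pderiv i h)



/-- The directional derivative of a polynomial. -/
noncomputable def dirD {n : ℕ} (v : Fin n → ℂ) :
    MvPolynomial (Fin n) ℂ →ₗ[ℂ] MvPolynomial (Fin n) ℂ :=
  ∑ i, v i • (pderiv i : Derivation ℂ _ _).toLinearMap

lemma dirD_apply {n : ℕ} (v : Fin n → ℂ) (h : MvPolynomial (Fin n) ℂ) :
    dirD v h = ∑ i, v i • pderiv i h := by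
  simp [dirD]

/-- The gradient at `p`, as a linear functional. -/
noncomputable def gradAt {n : ℕ} (p : Fin n → ℂ) :
    MvPolynomial (Fin n) ℂ →ₗ[ℂ] Module.Dual ℂ (Fin n → ℂ) where
  toFun h := ∑ i, eval p (pderiv i h) • LinearMap.proj i
  map_add' a b := by simp [add_smul, Finset.sum_add_distrib]
  map_smul' c a := by simp [Finset.smul_sum, smul_smul]

lemma gradAt_apply {n : ℕ} (p v : Fin n → ℂ) (h : MvPolynomial (Fin n) ℂ) :
    gradAt p h v = eval p (dirD v h) := by
  simp [gradAt, dirD_apply, smul_eval, mul_comm]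

lemma dirD_mul_X {n : ℕ} (e : Fin n → ℂ) (f : MvPolynomial (Fin n) ℂ) (i : Fin n) :
    dirD e (f * X i) = dirD e f * X i + e i • f := by
  have h1 : ∀ j, e j • pderiv j (f * X i) =
      (e j • pderiv j f) * X i + if i = j then e j • f else 0 := by
    intro j
    rw [pderiv_mul, pderiv_X, smul_add, smul_mul_assoc]
    congr 1
    by_cases h : i = j
    · subst h; simp
    · simp [h]
  simp only [dirD_apply, h1, Finset.sum_add_distrib, Finset.sum_mul]
  simp

lemma pderiv_comm' {n : ℕ} (i j : Fin n) (h : MvPolynomial (Fin n) ℂ) :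
    pderiv i (pderiv j h) = pderiv j (pderiv i h) := by
  have : ⁅(pderiv i : Derivation ℂ (MvPolynomial (Fin n) ℂ) (MvPolynomial (Fin n) ℂ)),
      (pderiv j : Derivation ℂ (MvPolynomial (Fin n) ℂ) (MvPolynomial (Fin n) ℂ))⁆ = 0 := by
    apply derivation_ext
    intro k
    rw [Derivation.commutator_apply]
    simp only [pderiv_X, Derivation.zero_apply]
    simp [Pi.single_apply]
    split_ifs <;> simp
  have h2 := congrArg (fun D => D h) this
  simp only [Derivation.commutator_apply, Derivation.zero_apply] at h2
  exact sub_eq_zero.mp h2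

lemma pderiv_dirD {n : ℕ} (i : Fin n) (v : Fin n → ℂ) (h : MvPolynomial (Fin n) ℂ) :
    pderiv i (dirD v h) = dirD v (pderiv i h) := by
  simp only [dirD_apply, map_sum, Derivation.map_smul, pderiv_comm' i]

lemma dirD_comm {n : ℕ} (w v : Fin n → ℂ) (h : MvPolynomial (Fin n) ℂ) :
    dirD w (dirD v h) = dirD v (dirD w h) := by
  rw [dirD_apply w, dirD_apply w h]
  simp only [map_sum, map_smul, pderiv_dirD]

lemma hasStrictFDerivAt_evalMv {n : ℕ} (p : Fin n → ℂ) (h : MvPolynomial (Fin n) ℂ) :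
    HasStrictFDerivAt (fun y : Fin n → ℂ => eval y h)
      (LinearMap.toContinuousLinearMap (gradAt p h)) p := by
  induction h using MvPolynomial.induction_on with
  | C a =>
    have : LinearMap.toContinuousLinearMap (gradAt p (C a)) = 0 := by
      ext v; simp [gradAt]
    rw [this]
    simpa using hasStrictFDerivAt_const a p
  | add f g hf hg =>
    rw [map_add, map_add]
    simp only [map_add]
    exact hf.add hg
  | mul_X f i hf =>
    have h1 := hf.mul (hasStrictFDerivAt_apply (𝕜 := ℂ) i p)
    simp only [map_mul, eval_X]
    refine h1.congr_fderiv ?_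
    ext v
    change _ = gradAt p (f * X i) v
    have h2 : LinearMap.toContinuousLinearMap (gradAt p f) v = eval p (dirD v f) :=
      gradAt_apply p v f
    rw [gradAt_apply, dirD_mul_X]
    simp [h2, smul_eval]
    ring

lemma totalDegree_pderiv_le' {n : ℕ} (i : Fin n) (h : MvPolynomial (Fin n) ℂ) :
    (pderiv i h).totalDegree ≤ h.totalDegree := by
  rw [totalDegree]
  refine Finset.sup_le fun m hm => ?_
  have h1 : m + Finsupp.single i 1 ∈ h.support := by
    rw [mem_support_iff] at hm ⊢
    intro h0
    apply hm
    rw [coeff_pderiv, h0, zero_mul]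
  refine le_trans ?_ (le_totalDegree h1)
  rw [Finsupp.sum_add_index' (fun _ => rfl) (fun _ _ _ => rfl)]
  exact Nat.le_add_right _ _

/-- Restriction to a line. -/
lemma eval_line_eq_zero {n : ℕ} (p e : Fin n → ℂ) (h : MvPolynomial (Fin n) ℂ)
    (hh : ∀ k : ℕ, eval p ((dirD e)^[k] h) = 0) : eval (p + e) h = 0 := by
  obtain ⟨φ, hX⟩ : ∃ φ : MvPolynomial (Fin n) ℂ →ₐ[ℂ] Polynomial ℂ,
      ∀ i, φ (X i) = Polynomial.C (p i) + Polynomial.C (e i) * Polynomial.X :=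
    ⟨aeval (fun i => Polynomial.C (p i) + Polynomial.C (e i) * Polynomial.X),
      fun i => aeval_X _ i⟩
  have hC : ∀ a, φ (C a) = Polynomial.C a := fun a => φ.commutes a
  have hev : ∀ (t : ℂ) g, Polynomial.eval t (φ g) = eval (p + t • e) g := by
    intro t g
    induction g using MvPolynomial.induction_on with
    | C a => rw [hC, Polynomial.eval_C, eval_C]
    | add f g hf hg => rw [map_add, Polynomial.eval_add, hf, hg, map_add]
    | mul_X f i hf =>
      rw [map_mul, Polynomial.eval_mul, hf, map_mul, hX, eval_X]
      simp only [Polynomial.eval_add, Polynomial.eval_mul, Polynomial.eval_C, Polynomial.eval_X,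
        Pi.add_apply, Pi.smul_apply, smul_eq_mul]
      rw [mul_comm (e i) t]
  have hder : ∀ g, Polynomial.derivative (φ g) = φ (dirD e g) := by
    intro g
    induction g using MvPolynomial.induction_on with
    | C a => rw [hC]; simp [dirD_apply]
    | add f g hf hg => rw [map_add, Polynomial.derivative_add, hf, hg, map_add, map_add]
    | mul_X f i hf =>
      rw [dirD_mul_X, map_mul, Polynomial.derivative_mul, hf, map_add, map_mul, map_smul, hX]
      simp only [Polynomial.derivative_add, Polynomial.derivative_mul, Polynomial.derivative_C,
        Polynomial.derivative_X, Polynomial.smul_eq_C_mul]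
      ring
  have hit : ∀ (k : ℕ) g, Polynomial.derivative^[k] (φ g) = φ ((dirD e)^[k] g) := by
    intro k
    induction k with
    | zero => simp
    | succ k ih => intro g; rw [Function.iterate_succ_apply, hder, ih, Function.iterate_succ_apply]
  have hz : φ h = 0 := by
    ext k
    have h1 := Polynomial.coeff_iterate_derivative (k := k) (φ h) 0
    rw [hit, Polynomial.coeff_zero_eq_eval_zero, hev] at h1
    simp only [zero_smul, add_zero, hh, zero_add, Nat.descFactorial_self] at h1
    have := h1.symm
    rw [smul_eq_zero] at this
    simpa [Nat.factorial_ne_zero] using this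
  have := hev 1 h
  rw [hz] at this
  simpa using this.symm

/-- A submersion with nontrivial kernel has no isolated points in its fibres. -/
lemma not_isolated_of_surj {E F : Type*} [NormedAddCommGroup E] [NormedSpace ℂ E]
    [FiniteDimensional ℂ E] [NormedAddCommGroup F] [NormedSpace ℂ F] [FiniteDimensional ℂ F]
    {f : E → F} {f' : E →L[ℂ] F} {a : E} (hf : HasStrictFDerivAt f f' a)
    (hs : f'.range = ⊤) (v : E) (hv : v ≠ 0) (hk : f' v = 0)
    (U : Set E) (hU : U ∈ nhds a) : ∃ z ∈ U, f z = f a ∧ z ≠ a := by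
  have : CompleteSpace E := FiniteDimensional.complete ℂ E
  have : CompleteSpace F := FiniteDimensional.complete ℂ F
  by_contra hcon
  push Not at hcon
  let Φ := hf.implicitToOpenPartialHomeomorph f f' hs
  have hself : Φ a = (f a, 0) := hf.implicitToOpenPartialHomeomorph_self hs
  have hsrc : a ∈ Φ.source := hf.mem_implicitToOpenPartialHomeomorph_source hs
  have htgt : (f a, (0 : f'.ker)) ∈ Φ.target := hf.mem_implicitToOpenPartialHomeomorph_target hs
  have hc : Filter.Tendsto (fun y : f'.ker => (f a, y)) (nhds 0) (nhds (f a, 0)) := by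
    apply Continuous.tendsto; fun_prop
  have hsymm : Filter.Tendsto Φ.symm (nhds (f a, (0 : f'.ker))) (nhds a) := by
    have := (Φ.continuousAt_symm htgt).tendsto
    rwa [← hself, Φ.left_inv hsrc, hself] at this
  have h1 : ∀ᶠ y : f'.ker in nhds 0, Φ.symm (f a, y) ∈ U := (hsymm.comp hc) hU
  have h2 : ∀ᶠ y : f'.ker in nhds 0, (f a, y) ∈ Φ.target :=
    hc (Φ.open_target.mem_nhds htgt)
  have h3 : ∀ᶠ y : f'.ker in nhds 0, y = 0 := by
    filter_upwards [h1, h2] with y hy1 hy2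
    have hr : Φ (Φ.symm (f a, y)) = (f a, y) := Φ.right_inv hy2
    have hfst : (Φ (Φ.symm (f a, y))).1 = f (Φ.symm (f a, y)) :=
      hf.implicitToOpenPartialHomeomorph_fst hs _
    rw [hr] at hfst
    have := hcon _ hy1 hfst.symm
    rw [this, hself] at hr
    exact (congrArg Prod.snd hr).symm
  have : Nontrivial f'.ker := ⟨⟨⟨v, hk⟩, 0, fun h => hv (congrArg Subtype.val h)⟩⟩
  have : (nhdsWithin (0 : f'.ker) {0}ᶜ).NeBot := Module.punctured_nhds_neBot ℂ f'.ker 0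
  obtain ⟨y, hy, hy'⟩ := ((h3.filter_mono nhdsWithin_le_nhds).and
    (self_mem_nhdsWithin : {(0 : f'.ker)}ᶜ ∈ nhdsWithin (0 : f'.ker) {0}ᶜ)).exists
  exact hy' hy

lemma range_pi_eq_top {E : Type*} [AddCommGroup E] [Module ℂ E] {k : ℕ}
    (r : Fin k → Module.Dual ℂ E) (hli : LinearIndependent ℂ r) :
    LinearMap.range (LinearMap.pi r) = ⊤ := by
  by_contra hne
  obtain ⟨l, hl0, hl⟩ := Submodule.exists_le_ker_of_lt_top _ (lt_top_iff_ne_top.mpr hne)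
  apply hl0
  have hz : ∑ i, l (Pi.single i 1) • r i = 0 := by
    ext e
    have h1 : l (LinearMap.pi r e) = 0 := LinearMap.mem_ker.mp (hl ⟨e, rfl⟩)
    have h2 : LinearMap.pi r e = ∑ i, r i e • (Pi.single i 1 : Fin k → ℂ) := by
      funext j
      simp [Finset.sum_apply, Pi.single_apply]
    rw [h2, map_sum] at h1
    rw [LinearMap.sum_apply, LinearMap.zero_apply, ← h1]
    refine Finset.sum_congr rfl fun i _ => ?_
    rw [LinearMap.smul_apply, map_smul, smul_eq_mul, smul_eq_mul, mul_comm]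
  have hall := Fintype.linearIndependent_iff.mp hli _ hz
  apply LinearMap.pi_ext'
  intro i
  ext
  simpa using hall i

/-- Abstract core: a space of polynomials vanishing at `p` which contains the derivatives of each
of its members with vanishing gradient, and whose zero at `p` is isolated, has full gradients. -/
lemma map_gradAt_eq_top {n : ℕ} (p : Fin n → ℂ) (Δ : Submodule ℂ (MvPolynomial (Fin n) ℂ))
    (hΔ0 : ∀ h ∈ Δ, eval p h = 0)
    (hΔd : ∀ h ∈ Δ, ∀ i, eval p (pderiv i h) = 0 → pderiv i h ∈ Δ)
    (hiso : ∃ ε > 0, ∀ y : Fin n → ℂ, dist y p < ε → (∀ h ∈ Δ, eval y h = 0) → y = p) :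
    Δ.map (gradAt p) = ⊤ := by
  by_contra hW
  have hbot : (Δ.map (gradAt p)).dualCoannihilator ≠ ⊥ := by
    intro hb
    apply hW
    have := Subspace.dualCoannihilator_dualAnnihilator_eq (W := Δ.map (gradAt p))
    rw [hb, Submodule.dualAnnihilator_bot] at this
    exact this.symm
  obtain ⟨v, hvW, hv0⟩ := Submodule.exists_mem_ne_zero_of_ne_bot hbot
  let M : Submodule ℂ (MvPolynomial (Fin n) ℂ) := Δ ⊓ LinearMap.ker (gradAt p)
  let A : Submodule ℂ (MvPolynomial (Fin n) ℂ) :=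
    M ⊔ ⨆ i : Fin n, M.map (pderiv i : Derivation ℂ (MvPolynomial (Fin n) ℂ) _).toLinearMap
  have hMA : M ≤ A := le_sup_left
  have hDMA : ∀ i, ∀ h ∈ M, pderiv i h ∈ A := fun i h hh =>
    (le_sup_right : _ ≤ A) (Submodule.mem_iSup_of_mem i ⟨h, hh, rfl⟩)
  have hAΔ : A ≤ Δ := by
    refine sup_le inf_le_left (iSup_le fun i => ?_)
    rintro _ ⟨h, ⟨h1, h2⟩, rfl⟩
    refine hΔd h h1 i ?_
    have := congrArg (fun l => l (Pi.single i 1)) (LinearMap.mem_ker.mp h2)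
    simpa [gradAt, Pi.single_apply] using this
  have hdirMA : ∀ w, ∀ h ∈ M, dirD w h ∈ A := by
    intro w h hh
    rw [dirD_apply]
    exact Submodule.sum_mem _ fun i _ => Submodule.smul_mem _ _ (hDMA i h hh)
  let E : Submodule ℂ (Fin n → ℂ) := (A.map (gradAt p)).dualCoannihilator
  have hE : ∀ e ∈ E, ∀ h ∈ A, eval p (dirD e h) = 0 := by
    intro e he h hh
    rw [← gradAt_apply]
    exact (Submodule.mem_dualCoannihilator _).mp he _ ⟨h, hh, rfl⟩
  have hdM : ∀ e ∈ E, ∀ h ∈ M, dirD e h ∈ M := by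
    intro e he h hh
    refine ⟨hAΔ (hdirMA e h hh), ?_⟩
    refine LinearMap.mem_ker.mpr (LinearMap.ext fun w => ?_)
    rw [gradAt_apply, dirD_comm, hE e he _ (hdirMA w h hh)]
    rfl
  have hdA : ∀ e ∈ E, A ≤ A.comap (dirD e) := by
    intro e he
    refine sup_le (fun h hh => hMA (hdM e he h hh)) (iSup_le fun i => ?_)
    rintro _ ⟨h, hh, rfl⟩
    change dirD e (pderiv i h) ∈ A
    rw [← pderiv_dirD]
    exact hDMA i _ (hdM e he h hh)
  have hAvan : ∀ e ∈ E, ∀ h ∈ A, eval (p + e) h = 0 := by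
    intro e he h hh
    apply eval_line_eq_zero
    intro k
    apply hΔ0
    apply hAΔ
    induction k with
    | zero => exact hh
    | succ k ih => rw [Function.iterate_succ_apply']; exact hdA e he ih
  -- restricted gradients
  let ρ : MvPolynomial (Fin n) ℂ →ₗ[ℂ] Module.Dual ℂ E :=
    E.subtype.dualMap.comp (gradAt p)
  have hρ : ∀ h (e : E), ρ h e = gradAt p h e := fun h e => rfl
  have hker : ∀ h ∈ Δ, ρ h = 0 → h ∈ A := by
    intro h hh h0
    have h1 : gradAt p h ∈ E.dualAnnihilator := by
      rw [Submodule.mem_dualAnnihilator]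
      intro w hw
      exact congrArg (fun l => l ⟨w, hw⟩) h0
    rw [Subspace.dualCoannihilator_dualAnnihilator_eq] at h1
    obtain ⟨a, ha, hag⟩ := h1
    have h2 : h - a ∈ M := ⟨Δ.sub_mem hh (hAΔ ha), LinearMap.mem_ker.mpr (by
      rw [map_sub, hag, sub_self])⟩
    have := A.add_mem (hMA h2) ha
    simpa using this
  let R := Δ.map ρ
  let b := Module.finBasis ℂ R
  have hlift : ∀ i, ∃ g ∈ Δ, ρ g = (b i : Module.Dual ℂ E) := fun i => (b i).2
  choose g hgΔ hgρ using hlift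
  let k := Module.finrank ℂ R
  let ψ : E → (Fin k → ℂ) := fun e i => eval (p + (e : Fin n → ℂ)) (g i)
  let ψ' : E →L[ℂ] (Fin k → ℂ) := LinearMap.toContinuousLinearMap (LinearMap.pi fun i => ρ (g i))
  have hψ : HasStrictFDerivAt ψ ψ' 0 := by
    rw [hasStrictFDerivAt_pi']
    intro i
    have h1 : HasStrictFDerivAt (fun e : E => p + (e : Fin n → ℂ)) E.subtypeL 0 :=
      E.subtypeL.hasStrictFDerivAt.const_add p
    have h2 : HasStrictFDerivAt (fun y : Fin n → ℂ => eval y (g i))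
      (LinearMap.toContinuousLinearMap (gradAt p (g i))) (p + ((0 : E) : Fin n → ℂ)) := by
      simpa using hasStrictFDerivAt_evalMv p (g i)
    refine (h2.comp (0 : E) h1).congr_fderiv (g' := (ContinuousLinearMap.proj i).comp ψ') (by
      ext e
      exact (hρ (g i) e).symm)
  have hsurj : ψ'.range = ⊤ := by
    have hli : LinearIndependent ℂ (fun i => ρ (g i)) := by
      have : (fun i => ρ (g i)) = fun i => R.subtype (b i) := by
        funext i; exact hgρ i
      rw [this]
      exact b.linearIndependent.map' R.subtype (Submodule.ker_subtype R)
    exact range_pi_eq_top _ hli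
  have hvE : v ∈ E := Submodule.dualCoannihilator_anti (Submodule.map_mono hAΔ) hvW
  have hψv : ψ' ⟨v, hvE⟩ = 0 := by
    funext i
    exact (Submodule.mem_dualCoannihilator _).mp hvW _ ⟨g i, hgΔ i, rfl⟩
  obtain ⟨ε, hε, hiso⟩ := hiso
  obtain ⟨z, hzU, hzψ, hz0⟩ := not_isolated_of_surj hψ hsurj ⟨v, hvE⟩
    (fun h => hv0 (congrArg Subtype.val h)) hψv (Metric.ball 0 ε) (Metric.ball_mem_nhds _ hε)
  have hfin : p + (z : Fin n → ℂ) = p := by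
    apply hiso
    · simpa [dist_eq_norm] using hzU
    · intro h hh
      have hmem : ρ h ∈ R := ⟨h, hh, rfl⟩
      have hsum := b.sum_repr ⟨ρ h, hmem⟩
      set c := b.repr ⟨ρ h, hmem⟩
      have h1 : h - ∑ i, c i • g i ∈ A := by
        apply hker
        · exact Δ.sub_mem hh (Δ.sum_mem fun i _ => Δ.smul_mem _ (hgΔ i))
        · have := congrArg Subtype.val hsum
          simp only [Submodule.coe_sum, Submodule.coe_smul] at this
          rw [map_sub, map_sum, ← this]
          simp [hgρ]
      have h2 := hAvan z z.2 _ h1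
      have h3 : ∀ i, eval (p + (z : Fin n → ℂ)) (g i) = 0 := by
        intro i
        have := congrFun hzψ i
        simp only [ψ, ZeroMemClass.coe_zero, add_zero] at this
        rw [this, hΔ0 _ (hgΔ i)]
      simpa [smul_eval, h3] using h2
  apply hz0
  ext1
  simpa using hfin

/-- Let `F = {f₁,…,f_N} ⊂ ℂ[x₁,…,xₙ]` with `N ≥ n`, let `p ∈ ℂⁿ` be an
isolated singular zero of `F = 0`, and let `m = maxᵢ deg fᵢ`. Then there is a square system
`F′ = {f′₁,…,f′ₙ}` with each `f′ᵢ ∈ Δ_p(F)` such that `p` is an isolated regular zero of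
`F′ = 0` and `maxᵢ deg f′ᵢ ≤ m`. -/
theorem exists_deflated_square_system {n N : ℕ} (hN : n ≤ N)
    (f : Fin N → MvPolynomial (Fin n) ℂ) (p : Fin n → ℂ)
    (hzero : ∀ i, eval p (f i) = 0)
    (hisolated : ∃ ε > 0, ∀ y : Fin n → ℂ, dist y p < ε → (∀ i, eval y (f i) = 0) → y = p)
    (hsingular : jacRank f p < n) :
    ∃ f' : Fin n → MvPolynomial (Fin n) ℂ,
      (∀ i, DeltaSet (Set.range f) p (f' i)) ∧
      (∀ i, eval p (f' i) = 0) ∧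
      jacRank f' p = n ∧
      (∃ ε > 0, ∀ y : Fin n → ℂ, dist y p < ε → (∀ i, eval y (f' i) = 0) → y = p) ∧
      ∀ i, (f' i).totalDegree ≤ Finset.univ.sup fun j => (f j).totalDegree := by
  obtain ⟨ε, hε, hiso⟩ := hisolated
  have hn : 0 < n := by omega
  have hvan : ∀ h, DeltaSet (Set.range f) p h → eval p h = 0 := by
    intro h hh
    induction hh with
    | base hf => obtain ⟨i, rfl⟩ := hf; exact hzero i
    | smul a ha _ ih => simp [ih]
    | add _ _ hsum => simpa using hsum
    | deriv i _ hz => exact hz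
  have hdeg : ∀ h, DeltaSet (Set.range f) p h →
      h.totalDegree ≤ Finset.univ.sup fun j => (f j).totalDegree := by
    intro h hh
    induction hh with
    | base hf =>
      obtain ⟨i, rfl⟩ := hf
      exact Finset.le_sup (f := fun j => (f j).totalDegree) (Finset.mem_univ i)
    | smul a ha _ ih =>
      refine le_trans ?_ ih
      rw [← smul_eq_C_mul]
      exact totalDegree_smul_le _ _
    | add _ _ hsum ih1 ih2 => exact (totalDegree_add _ _).trans (max_le ih1 ih2)
    | deriv i _ hz ih => exact (totalDegree_pderiv_le' i _).trans ih
  have hz0 : DeltaSet (Set.range f) p 0 := by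
    have h1 : DeltaSet (Set.range f) p (f ⟨0, by omega⟩) := DeltaSet.base ⟨_, rfl⟩
    have h2 := DeltaSet.add h1 (DeltaSet.smul (-1) (by norm_num) h1)
      (by simp [hzero])
    simpa using h2
  let Δ : Submodule ℂ (MvPolynomial (Fin n) ℂ) :=
    { carrier := {h | DeltaSet (Set.range f) p h}
      add_mem' := fun {a b} ha hb => DeltaSet.add ha hb (by rw [hvan a ha, hvan b hb, add_zero])
      zero_mem' := hz0
      smul_mem' := by
        intro c h hh
        by_cases hc : c = 0
        · subst hc
          simpa using hz0
        · rw [smul_eq_C_mul]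
          exact DeltaSet.smul c hc hh }
  have htop : Δ.map (gradAt p) = ⊤ := by
    apply map_gradAt_eq_top p Δ hvan (fun h hh i hi => DeltaSet.deriv i hh hi)
    exact ⟨ε, hε, fun y hy hh => hiso y hy fun i => hh _ (DeltaSet.base ⟨i, rfl⟩)⟩
  have hex : ∀ i : Fin n, ∃ h, DeltaSet (Set.range f) p h ∧
      gradAt p h = (LinearMap.proj i : (Fin n → ℂ) →ₗ[ℂ] ℂ) := by
    intro i
    have : (LinearMap.proj i : (Fin n → ℂ) →ₗ[ℂ] ℂ) ∈ Δ.map (gradAt p) := by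
      rw [htop]; trivial
    exact this
  choose f' hf' hgr using hex
  have hjac : ∀ i j, eval p (pderiv j (f' i)) = (1 : Matrix (Fin n) (Fin n) ℂ) i j := by
    intro i j
    have := congrArg (fun l => l (Pi.single j 1)) (hgr i)
    simpa [gradAt, Pi.single_apply, Matrix.one_apply] using this
  refine ⟨f', hf', fun i => hvan _ (hf' i), ?_, ?_, fun i => hdeg _ (hf' i)⟩
  · unfold jacRank
    have : (Matrix.of fun (i : Fin n) (j : Fin n) => eval p (pderiv j (f' i))) = 1 := by
      ext i j; exact hjac i j
    rw [this, Matrix.rank_one, Fintype.card_fin]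
  · have hd : HasFDerivAt (fun (y : Fin n → ℂ) (i : Fin n) => eval y (f' i))
        (ContinuousLinearMap.id ℂ (Fin n → ℂ)) p := by
      rw [hasFDerivAt_pi']
      intro i
      refine (hasStrictFDerivAt_evalMv p (f' i)).hasFDerivAt.congr_fderiv ?_
      ext v
      simp [hgr]
    have hev := hd.eventually_ne (c := 0) ⟨1, AntilipschitzWith.id⟩
    rw [eventually_nhdsWithin_iff, Metric.eventually_nhds_iff] at hev
    obtain ⟨δ, hδ, hev⟩ := hev
    refine ⟨δ, hδ, fun y hy hy0 => ?_⟩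
    by_contra hne
    exact hev hy hne (funext hy0)
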